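/- Let n be a finite type and let Λ, Γ, Φ : Matrix n n ℂ →ₗ[ℂ] Matrix n n ℂ satisfy Λ = (1+s) • Γ - s • Φ with s ≥ 0 and Φ positive (Φ maps positive semidefinite matrices to positive semidefinite matrices). Fix a nonempty finite index type J, reals p_j ≥ 0 (j ∈ J) with max_j p_j > 0, density matrices σ_j ∈ Matrix n n ℂ, and a POVM (N_y)_{y ∈ Y}, i.e., a finite family of positive semidefinite matrices with Σ_y N_y = 1. For a linear map Θ define S(Θ) := Σ_{y ∈ Y} max_{j ∈ J} (p_j · Re Tr(Θ(σ_j) · N_y)) and the min-information I_min(Θ) := Real.log (S(Θ)) - Real.log (max_{j ∈ J} p_j). If S(Λ) > 0 and S(Γ) > 0, then I_min(Λ) ≤ Real.log (1+s) + I_min(Γ). In particular, taking s equal to the robustness of non-Markovianity of Λ, the min-accessible information of Λ exceeds that of the Markovian map Γ by at most log(1 + N_R(Λ)). -/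

import Mathlib

open Matrix
open scoped ComplexOrder

/-- A density matrix: positive semidefinite with unit trace. -/
def IsDensityMatrix {n : Type*} [Fintype n] (ρ : Matrix n n ℂ) : Prop :=
  ρ.PosSemidef ∧ ρ.trace = 1

/-- A positive map: maps positive semidefinite matrices to positive semidefinite matrices. -/
def IsPositiveMap {n : Type*} [Fintype n]
    (Φ : Matrix n n ℂ →ₗ[ℂ] Matrix n n ℂ) : Prop :=
  ∀ X : Matrix n n ℂ, X.PosSemidef → (Φ X).PosSemidef

/-- The guessing probability `S(Θ) = Σ_y max_j p_j Re Tr[Θ(σ_j)N_y]` of a map `Θ` with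
respect to an encoding ensemble `(p_j, σ_j)` and a decoding POVM `(N_y)`. -/
noncomputable def guessingProb {n J Y : Type*} [Fintype n] [Fintype J] [Nonempty J]
    [Fintype Y] (Θ : Matrix n n ℂ →ₗ[ℂ] Matrix n n ℂ)
    (p : J → ℝ) (σ : J → Matrix n n ℂ) (N : Y → Matrix n n ℂ) : ℝ :=
  ∑ y, Finset.univ.sup' Finset.univ_nonempty
    (fun j => p j * ((Θ (σ j) * N y).trace).re)

/-- The min-information `I_min = log S(Θ) - log max_j p_j` of a map `Θ` with respect to an
encoding ensemble and a decoding POVM. -/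
noncomputable def minInfo {n J Y : Type*} [Fintype n] [Fintype J] [Nonempty J] [Fintype Y]
    (Θ : Matrix n n ℂ →ₗ[ℂ] Matrix n n ℂ)
    (p : J → ℝ) (σ : J → Matrix n n ℂ) (N : Y → Matrix n n ℂ) : ℝ :=
  Real.log (guessingProb Θ p σ N) - Real.log (Finset.univ.sup' Finset.univ_nonempty p)

/-! Linear maps are ordered by positivity of their difference. Since the trace of a product of two
positive semidefinite matrices is nonnegative, the guessing probability is monotone for this order,
and it is positively homogeneous because a maximum is. Hence `Λ ≤ (1 + s) • Γ` gives
`S(Λ) ≤ (1 + s) * S(Γ)`, and the bound on the min-information is the logarithm of this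
inequality. -/

theorem trace_mul_nonneg_of_posSemidef {n 𝕜 : Type*} [Fintype n] [RCLike 𝕜]
    {A B : Matrix n n 𝕜} (hA : A.PosSemidef) (hB : B.PosSemidef) : 0 ≤ (A * B).trace := by
  classical
  open scoped MatrixOrder in
  obtain ⟨C, rfl⟩ := CStarAlgebra.nonneg_iff_eq_star_mul_self.mp hB.nonneg
  have hcycle : (A * (Cᴴ * C)).trace = (C * A * Cᴴ).trace := by
    rw [← Matrix.mul_assoc, Matrix.trace_mul_cycle]
  exact hcycle ▸ (hA.mul_mul_conjTranspose_same C).trace_nonneg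

section

variable {n J Y : Type*} [Fintype n] [Fintype J] [Nonempty J] [Fintype Y]
  {Λ Γ : Matrix n n ℂ →ₗ[ℂ] Matrix n n ℂ}
  {p : J → ℝ} {σ : J → Matrix n n ℂ} {N : Y → Matrix n n ℂ} {c : ℝ}

theorem IsPositiveMap.smul (hΓ : IsPositiveMap Γ) (hc : 0 ≤ c) :
    IsPositiveMap ((c : ℂ) • Γ) :=
  fun X hX => (hΓ X hX).smul (Complex.zero_le_real.mpr hc)

theorem IsPositiveMap.re_trace_mul_le (h : IsPositiveMap (Γ - Λ)) {ρ M : Matrix n n ℂ}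
    (hρ : ρ.PosSemidef) (hM : M.PosSemidef) : (Λ ρ * M).trace.re ≤ (Γ ρ * M).trace.re := by
  have hdiff : 0 ≤ ((Γ ρ - Λ ρ) * M).trace := trace_mul_nonneg_of_posSemidef (h ρ hρ) hM
  rw [Matrix.sub_mul, Matrix.trace_sub, sub_nonneg] at hdiff
  exact Complex.re_le_re hdiff

theorem guessingProb_mono (h : IsPositiveMap (Γ - Λ)) (hp : ∀ j, 0 ≤ p j)
    (hσ : ∀ j, (σ j).PosSemidef) (hN : ∀ y, (N y).PosSemidef) :
    guessingProb Λ p σ N ≤ guessingProb Γ p σ N :=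
  Finset.sum_le_sum fun y _ => Finset.sup'_mono_fun fun j _ =>
    mul_le_mul_of_nonneg_left (h.re_trace_mul_le (hσ j) (hN y)) (hp j)

theorem guessingProb_smul (hc : 0 ≤ c) :
    guessingProb ((c : ℂ) • Γ) p σ N = c * guessingProb Γ p σ N := by
  simp only [guessingProb, Finset.mul_sum, Finset.mul₀_sup' hc, LinearMap.smul_apply,
    Matrix.smul_mul, Matrix.trace_smul, smul_eq_mul, Complex.re_ofReal_mul, mul_left_comm c]

theorem minInfo_mono (h : IsPositiveMap (Γ - Λ)) (hp : ∀ j, 0 ≤ p j)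
    (hσ : ∀ j, (σ j).PosSemidef) (hN : ∀ y, (N y).PosSemidef)
    (hΛ : 0 < guessingProb Λ p σ N) : minInfo Λ p σ N ≤ minInfo Γ p σ N :=
  sub_le_sub_right (Real.log_le_log hΛ (guessingProb_mono h hp hσ hN)) _

theorem minInfo_smul (hc : 0 < c) (hΓ : guessingProb Γ p σ N ≠ 0) :
    minInfo ((c : ℂ) • Γ) p σ N = Real.log c + minInfo Γ p σ N := by
  rw [minInfo, guessingProb_smul hc.le, Real.log_mul hc.ne' hΓ, add_sub_assoc, minInfo]

theorem minInfo_bound_general (hc : 0 < c) (h : IsPositiveMap ((c : ℂ) • Γ - Λ))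
    (hp : ∀ j, 0 ≤ p j) (hσ : ∀ j, (σ j).PosSemidef) (hN : ∀ y, (N y).PosSemidef)
    (hΛ : 0 < guessingProb Λ p σ N) : minInfo Λ p σ N ≤ Real.log c + minInfo Γ p σ N := by
  have hΓ : guessingProb Γ p σ N ≠ 0 := by
    have hpos := hΛ.trans_le (guessingProb_mono h hp hσ hN)
    rw [guessingProb_smul hc.le] at hpos
    exact (pos_of_mul_pos_right hpos hc.le).ne'
  calc minInfo Λ p σ N ≤ minInfo ((c : ℂ) • Γ) p σ N := minInfo_mono h hp hσ hN hΛ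
    _ = Real.log c + minInfo Γ p σ N := minInfo_smul hc hΓ

end

/-- Single-shot information-theoretic bound: for `Λ = (1+s)Γ - sΦ` with `Φ` positive, the
min-information of `Λ` exceeds that of `Γ` by at most `log(1+s)`; taking `s = N_R(Λ)` this
bounds the min-accessible information of a non-Markovian map in terms of its robustness. -/
theorem minInfo_bound {n : Type*} [Fintype n] [DecidableEq n]
    (Λ Γ Φ : Matrix n n ℂ →ₗ[ℂ] Matrix n n ℂ) (s : ℝ) (hs : 0 ≤ s)
    (hΦ : IsPositiveMap Φ)
    (hdec : Λ = (((1 + s : ℝ) : ℂ)) • Γ - ((s : ℝ) : ℂ) • Φ)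
    (J : Type*) [Fintype J] [Nonempty J]
    (p : J → ℝ) (hp : ∀ j, 0 ≤ p j)
    (hpmax : 0 < Finset.univ.sup' Finset.univ_nonempty p)
    (σ : J → Matrix n n ℂ) (hσ : ∀ j, IsDensityMatrix (σ j))
    (Y : Type*) [Fintype Y]
    (N : Y → Matrix n n ℂ) (hNpos : ∀ y, (N y).PosSemidef)
    (hNsum : ∑ y, N y = 1)
    (hSΛ : 0 < guessingProb Λ p σ N) (hSΓ : 0 < guessingProb Γ p σ N) :
    minInfo Λ p σ N ≤ Real.log (1 + s) + minInfo Γ p σ N := by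
  have hdom : IsPositiveMap (((1 + s : ℝ) : ℂ) • Γ - Λ) := by
    simpa only [hdec, sub_sub_cancel] using hΦ.smul hs
  exact minInfo_bound_general (by positivity) hdom hp (fun j => (hσ j).1) hNpos hSΛ
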